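/- The derivation module D(𝒜₂₄₅) of the central hyperplane arrangement 𝒜₂₄₅ in ℂ⁴ with defining equation Q₂₄₅ = x·y·z·w·(x+y+z)·(y+z+w)·(x−y−w)·(x−y+z+w) is not a free module over S = ℂ[x,y,z,w]. -/

import Mathlib

open MvPolynomial

noncomputable section

/-- The polynomial ring `S = ℂ[x,y,z,w]`, with `x = X 0`, `y = X 1`, `z = X 2`, `w = X 3`. -/
abbrev S4 : Type := MvPolynomial (Fin 4) ℂ

/-- The linear form `c₀·x + c₁·y + c₂·z + c₃·w` with coefficient vector `c`. -/
noncomputable def linForm (c : Fin 4 → ℂ) : S4 := ∑ i, C (c i) * X i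

/-- A polynomial derivation `θ = a₁∂ₓ + a₂∂_y + a₃∂_z + a₄∂_w` of `S` is identified with
its coefficient tuple `a : Fin 4 → S`; the linear map `derMap f` sends `a` to `θ(f)`. -/
noncomputable def derMap (f : S4) : (Fin 4 → S4) →ₗ[S4] S4 where
  toFun a := ∑ i, a i * pderiv i f
  map_add' a b := by simp [add_mul, Finset.sum_add_distrib]
  map_smul' c a := by simp [Finset.mul_sum, mul_assoc]

/-- The derivation module `D(𝒜)` of the central arrangement whose hyperplanes are the kernels
of the linear forms `linForm (α H)`: all derivations `θ` with `θ(α_H) ∈ S·α_H` for every `H`. -/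
noncomputable def derivModule {ι : Type} (α : ι → (Fin 4 → ℂ)) :
    Submodule S4 (Fin 4 → S4) :=
  ⨅ H, Submodule.comap (derMap (linForm (α H))) (Ideal.span {linForm (α H)})

end

/-- The coefficient vectors of the eight linear factors of Q = xyzw(x+y+z)(y+z+w)(x-y-w)(x-y+z+w), defining the rigid Cynk–Szemberg octic arrangement 𝒜₂₄₅ ⊂ ℙ³. -/
noncomputable def A245 : Fin 8 → (Fin 4 → ℂ) :=
  ![![1, 0, 0, 0],
    ![0, 1, 0, 0],
    ![0, 0, 1, 0],
    ![0, 0, 0, 1],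
    ![1, 1, 1, 0],
    ![0, 1, 1, 1],
    ![1, -1, 0, -1],
    ![1, -1, 1, 1]]

/-!
Fibre dimensions detect non-freeness. If `D(𝒜) ⊆ S⁴` is free, its rank is at most `4`, so every map
from it to a `ℂ`-vector space that is surjective and semilinear along evaluation at a point `p` has
target of dimension at most `4`. Multiplying by the linear forms that do not vanish at `p` shows
that such maps see only the hyperplanes through `p`.

Suppose exactly four hyperplanes pass through `p ≠ 0`, any three of them independent. After scaling
they are `x₀`, `x₁`, `x₂` and `x₀ + x₁ + x₂`. For a derivation `θ` tangent to them write
`θ(xᵢ) = xᵢ fᵢ` and `θ(x₀ + x₁ + x₂) = (x₀ + x₁ + x₂) k`; then `(fᵢ - k)` is a syzygy of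
`(x₀, x₁, x₂)`. So locally `D(𝒜)` is the direct sum of the span of a derivation along `p`, the span
of the Euler derivation and the syzygy module, which needs the three Koszul syzygies as generators.
The fibre at `p` has dimension `1 + 1 + 3 = 5`. For `𝒜₂₄₅` take `p = (0, 0, 0, 1)` and the
hyperplanes `x`, `y`, `z`, `x + y + z`.
-/

section Rank

variable {R K M V : Type*} [Ring R] [StrongRankCondition R] [DivisionRing K]
  [AddCommGroup M] [Module R M] [Module.Free R M] [Module.Finite R M]
  [AddCommGroup V] [Module K V]

theorem finrank_le_of_semilinear_surjective {σ : R →+* K} (f : M →ₛₗ[σ] V)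
    (hf : Function.Surjective f) : Module.finrank K V ≤ Module.finrank R M := by
  let b := Module.Free.chooseBasis R M
  have hle : Submodule.span R (Set.range b) ≤
      (Submodule.span K (Set.range (f ∘ b))).comap f :=
    Submodule.span_le.2 <| Set.range_subset_iff.2 fun i ↦
      Submodule.subset_span (Set.mem_range_self i)
  have hspan : Submodule.span K (Set.range (f ∘ b)) = ⊤ := by
    refine eq_top_iff.2 fun v _ ↦ ?_
    obtain ⟨m, rfl⟩ := hf v
    exact hle (b.span_eq ▸ Submodule.mem_top)
  calc Module.finrank K V
      = (Set.range (f ∘ b)).finrank K := by rw [Set.finrank, hspan, finrank_top]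
    _ ≤ Fintype.card (Module.Free.ChooseBasisIndex R M) := finrank_range_le_card _
    _ = Module.finrank R M := (Module.finrank_eq_card_chooseBasisIndex R M).symm

end Rank

theorem exists_dual_of_linearIndependent {ι n K : Type*} [Finite ι] [DecidableEq ι] [Fintype n]
    [Field K] {u : ι → n → K} (hu : LinearIndependent K u) :
    ∃ v : ι → n → K, ∀ i j, u i ⬝ᵥ v j = if i = j then 1 else 0 := by
  classical
  have := Fintype.ofFinite ι
  have hinj : LinearMap.ker (Matrix.of u).vecMulLinear = ⊥ :=
    LinearMap.ker_eq_bot.2 (Matrix.vecMul_injective_iff.2 hu)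
  obtain ⟨L, hL⟩ := LinearMap.exists_leftInverse_of_injective _ hinj
  refine ⟨fun j k ↦ L (Pi.single k 1) j, fun i j ↦ ?_⟩
  have hLu : L (u i) = Pi.single i 1 := by
    simpa using LinearMap.congr_fun hL (Pi.single i 1)
  calc u i ⬝ᵥ (fun k ↦ L (Pi.single k 1) j)
      = L (u i) j := by
        conv_rhs => rw [pi_eq_sum_univ' (u i)]
        simp [dotProduct, Finset.sum_apply]
    _ = if i = j then 1 else 0 := by simp [hLu, Pi.single_apply, eq_comm]

theorem eval_linForm (p c : Fin 4 → ℂ) : eval p (linForm c) = c ⬝ᵥ p := by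
  simp [linForm, dotProduct]

theorem linForm_smul (r : ℂ) (c : Fin 4 → ℂ) : linForm (r • c) = C r * linForm c := by
  simp [linForm, Finset.mul_sum, mul_assoc]

theorem linForm_sum {ι : Type*} (s : Finset ι) (c : ι → Fin 4 → ℂ) :
    linForm (∑ i ∈ s, c i) = ∑ i ∈ s, linForm (c i) := by
  simp only [linForm, Finset.sum_apply, map_sum, Finset.sum_mul]
  exact Finset.sum_comm

theorem derMap_linForm (c : Fin 4 → ℂ) (a : Fin 4 → S4) :
    derMap (linForm c) a = ∑ i, C (c i) * a i := by
  simp [derMap, linForm, pderiv_X, Pi.single_apply, mul_comm]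

theorem derMap_linForm_smul (r : ℂ) (c : Fin 4 → ℂ) (a : Fin 4 → S4) :
    derMap (linForm (r • c)) a = C r * derMap (linForm c) a := by
  simp [derMap_linForm, Finset.mul_sum, mul_assoc]

theorem derMap_linForm_sum {ι : Type*} (s : Finset ι) (c : ι → Fin 4 → ℂ) (a : Fin 4 → S4) :
    derMap (linForm (∑ i ∈ s, c i)) a = ∑ i ∈ s, derMap (linForm (c i)) a := by
  simp only [derMap_linForm, Finset.sum_apply, map_sum, Finset.sum_mul]
  exact Finset.sum_comm

/-- The constant vector field `v`, as a coefficient tuple. -/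
noncomputable def constField (v : Fin 4 → ℂ) : Fin 4 → S4 := fun i ↦ C (v i)

theorem derMap_linForm_constField (c v : Fin 4 → ℂ) :
    derMap (linForm c) (constField v) = C (c ⬝ᵥ v) := by
  simp [derMap_linForm, constField, dotProduct]

/-- The directional derivative along the vector `v`. -/
noncomputable def dirDeriv (v : Fin 4 → ℂ) : Derivation ℂ S4 S4 := mkDerivation ℂ (constField v)

theorem dirDeriv_linForm (v c : Fin 4 → ℂ) : dirDeriv v (linForm c) = C (c ⬝ᵥ v) := by
  simp [dirDeriv, linForm, constField, dotProduct]

section Arrangement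

variable {ι κ : Type}

theorem mem_derivModule {α : ι → Fin 4 → ℂ} {a : Fin 4 → S4} :
    a ∈ derivModule α ↔ ∀ H, linForm (α H) ∣ derMap (linForm (α H)) a := by
  simp only [derivModule, Submodule.mem_iInf, Submodule.mem_comap, Ideal.mem_span_singleton]

theorem derivModule_le_of_smul {α : ι → Fin 4 → ℂ} {β : κ → Fin 4 → ℂ}
    (h : ∀ K, ∃ H, ∃ r : ℂ, β K = r • α H) : derivModule α ≤ derivModule β := by
  intro a ha
  refine mem_derivModule.2 fun K ↦ ?_
  obtain ⟨H, r, hK⟩ := h K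
  rw [hK, derMap_linForm_smul, linForm_smul]
  exact mul_dvd_mul_left _ (mem_derivModule.1 ha H)

/-- The localization `𝒜_p` of the arrangement `α`: the hyperplanes passing through `p`. -/
def localization (α : ι → Fin 4 → ℂ) (p : Fin 4 → ℂ) : {H // α H ⬝ᵥ p = 0} → Fin 4 → ℂ :=
  fun H ↦ α H

theorem derivModule_le_localization (α : ι → Fin 4 → ℂ) (p : Fin 4 → ℂ) :
    derivModule α ≤ derivModule (localization α p) :=
  fun _ ha ↦ mem_derivModule.2 fun H ↦ mem_derivModule.1 ha H

theorem derivModule_localization_eq {α : ι → Fin 4 → ℂ} {p : Fin 4 → ℂ}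
    {β : κ → Fin 4 → ℂ} {e : κ → ι} {c : κ → ℂ} (hmem : ∀ H, α H ⬝ᵥ p = 0 ↔ H ∈ Set.range e)
    (hc : ∀ i, c i ≠ 0) (hβ : ∀ i, β i = c i • α (e i)) :
    derivModule (localization α p) = derivModule β := by
  refine le_antisymm (derivModule_le_of_smul fun i ↦ ?_) (derivModule_le_of_smul fun H ↦ ?_)
  · exact ⟨⟨e i, (hmem _).2 ⟨i, rfl⟩⟩, c i, hβ i⟩
  · obtain ⟨i, hi⟩ := (hmem H).1 H.2
    refine ⟨i, (c i)⁻¹, ?_⟩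
    rw [hβ, inv_smul_smul₀ (hc i), hi, localization]

theorem exists_smul_mem_derivModule [Finite ι] (α : ι → Fin 4 → ℂ) (p : Fin 4 → ℂ) :
    ∃ q : S4, eval p q ≠ 0 ∧ ∀ a ∈ derivModule (localization α p), q • a ∈ derivModule α := by
  classical
  have := Fintype.ofFinite ι
  refine ⟨∏ H with α H ⬝ᵥ p ≠ 0, linForm (α H), ?_, fun a ha ↦ mem_derivModule.2 fun H ↦ ?_⟩
  · simp [map_prod, eval_linForm, Finset.prod_ne_zero_iff]
  · rw [map_smul, smul_eq_mul]
    by_cases hH : α H ⬝ᵥ p = 0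
    · exact (mem_derivModule.1 ha ⟨H, hH⟩).mul_left _
    · exact (Finset.dvd_prod_of_mem (fun H ↦ linForm (α H)) (by simpa using hH)).mul_right _

theorem finrank_le_four_of_localization [Finite ι] {α : ι → Fin 4 → ℂ} {p : Fin 4 → ℂ}
    [Module.Free S4 (derivModule α)] {V : Type*} [AddCommGroup V] [Module ℂ V]
    (f : derivModule (localization α p) →ₛₗ[eval p] V) (hf : Function.Surjective f) :
    Module.finrank ℂ V ≤ 4 := by
  obtain ⟨q, hq, hmem⟩ := exists_smul_mem_derivModule α p
  let g : derivModule α →ₛₗ[eval p] V :=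
    f.comp (Submodule.inclusion (derivModule_le_localization α p))
  have hg : Function.Surjective g := by
    intro v
    obtain ⟨a, ha⟩ := hf ((eval p q)⁻¹ • v)
    refine ⟨⟨q • a, hmem a a.2⟩, ?_⟩
    calc g ⟨q • a, hmem a a.2⟩ = f (q • a) := rfl
      _ = v := by rw [map_smulₛₗ, ha, smul_inv_smul₀ hq]
  calc Module.finrank ℂ V ≤ Module.finrank S4 (derivModule α) :=
        finrank_le_of_semilinear_surjective g hg
    _ ≤ Module.finrank S4 (Fin 4 → S4) := Submodule.finrank_le _
    _ = 4 := Module.finrank_fin_fun S4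

end Arrangement

/-- Linear coordinates adapted to a nonzero point `p`: three linear forms vanishing at `p`, vectors
dual to them, and a linear form `height` with value `1` at `p`. Linear forms are given by their
coefficient vectors. -/
structure PointFrame (p : Fin 4 → ℂ) where
  form : Fin 3 → Fin 4 → ℂ
  dual : Fin 3 → Fin 4 → ℂ
  height : Fin 4 → ℂ
  form_dual : ∀ i j, form i ⬝ᵥ dual j = if i = j then 1 else 0
  form_point : ∀ i, form i ⬝ᵥ p = 0
  height_point : height ⬝ᵥ p = 1

namespace PointFrame

variable {p : Fin 4 → ℂ} (F : PointFrame p)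

/-- The normal form of four hyperplanes in general position through the line `ℂp`: with `xᵢ` the
coordinates of the frame, the hyperplanes of `x₀ + x₁ + x₂`, `x₀`, `x₁`, `x₂`, in this order. -/
def quadruple : Fin 4 → Fin 4 → ℂ := Fin.cons (∑ i, F.form i) F.form

/-- The coordinate function `xᵢ` of the frame. -/
noncomputable def coord (i : Fin 3) : S4 := linForm (F.form i)

/-- The partial derivative `∂ᵢ` dual to the coordinate `xᵢ`, along the `i`-th dual vector. -/
noncomputable def partialDeriv (i : Fin 3) : Derivation ℂ S4 S4 := dirDeriv (F.dual i)

/-- The component `θ(xᵢ)` of a derivation `θ` in the coordinates of the frame. -/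
noncomputable def component (i : Fin 3) : (Fin 4 → S4) →ₗ[S4] S4 := derMap (F.coord i)

/-- The derivation `∑ gᵢ ∂ᵢ`. -/
noncomputable def ofComponents (g : Fin 3 → S4) : Fin 4 → S4 := ∑ i, g i • constField (F.dual i)

theorem eval_coord (i : Fin 3) : eval p (F.coord i) = 0 := by
  rw [coord, eval_linForm, F.form_point]

theorem partialDeriv_coord (i j : Fin 3) :
    F.partialDeriv j (F.coord i) = if i = j then 1 else 0 := by
  rw [partialDeriv, coord, dirDeriv_linForm, F.form_dual]
  split_ifs <;> simp

theorem component_ofComponents (g : Fin 3 → S4) (i : Fin 3) :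
    F.component i (F.ofComponents g) = g i := by
  simp [component, coord, ofComponents, derMap_linForm_constField, F.form_dual]

theorem mem_derivModule_quadruple {a : Fin 4 → S4} :
    a ∈ derivModule F.quadruple ↔
      (∑ i, F.coord i ∣ ∑ i, F.component i a) ∧ ∀ i, F.coord i ∣ F.component i a := by
  simp only [mem_derivModule, Fin.forall_fin_succ (n := 3), quadruple, Fin.cons_zero, Fin.cons_succ,
    linForm_sum, coord, component]
  rw [← linForm_sum, derMap_linForm_sum]

theorem exists_component_eq_coord_mul {a : Fin 4 → S4} (ha : a ∈ derivModule F.quadruple) :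
    ∃ f : Fin 3 → S4, (∀ i, F.component i a = F.coord i * f i) ∧
      ∀ i j, eval p (f i) = eval p (f j) := by
  obtain ⟨⟨k, hk⟩, hdvd⟩ := F.mem_derivModule_quadruple.1 ha
  choose f hf using hdvd
  have hfk (j : Fin 3) : eval p (f j) = eval p k := by
    simp only [hf] at hk
    simpa [partialDeriv_coord, eval_coord, Finset.sum_mul, apply_ite (eval p)]
      using congrArg (fun s ↦ eval p (F.partialDeriv j s)) hk
  exact ⟨f, hf, fun i j ↦ (hfk i).trans (hfk j).symm⟩

/-- The value `k(p)`, where `θ(x₀ + x₁ + x₂) = (x₀ + x₁ + x₂) k`; it is read off from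
`θ(x₀) = x₀ f₀`, as `f₀(p) = k(p)`. -/
noncomputable def eulerCoeff (a : Fin 4 → S4) : ℂ :=
  eval p (F.partialDeriv 0 (F.component 0 a))

/-- For `θ(xᵢ) = xᵢ fᵢ` and `θ(x₀ + x₁ + x₂) = (x₀ + x₁ + x₂) k`, the tuple `(fᵢ - k)` is a syzygy
of `(x₀, x₁, x₂)`, and `koszulCoeff i j`, for `i ≠ j`, is the value at `p` of its coefficient at
the Koszul syzygy `xⱼ eᵢ - xᵢ eⱼ`. This value is `∂ⱼ(fᵢ - k)(p)`, where `∂ⱼk(p) = ∂ⱼfⱼ(p)` because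
`fⱼ - k` lies in the ideal of the other two coordinates; the factor `1 / 2` comes from
`∂ⱼ∂ⱼ(xⱼ fⱼ)(p) = 2 ∂ⱼfⱼ(p)`. -/
noncomputable def koszulCoeff (i j : Fin 3) (a : Fin 4 → S4) : ℂ :=
  eval p (F.partialDeriv i (F.partialDeriv j (F.component i a))) -
    eval p (F.partialDeriv j (F.partialDeriv j (F.component j a))) / 2

/-- Five functionals giving the coordinates of a tangent derivation in the fibre at `p` of the
derivation module of `F.quadruple`. -/
noncomputable def jet (a : Fin 4 → S4) : Fin 5 → ℂ :=
  ![eval p (derMap (linForm F.height) a), F.eulerCoeff a,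
    F.koszulCoeff 0 1 a, F.koszulCoeff 0 2 a, F.koszulCoeff 1 2 a]

theorem eulerCoeff_eq {a : Fin 4 → S4} {f : S4} (h : F.component 0 a = F.coord 0 * f) :
    F.eulerCoeff a = eval p f := by
  simp [eulerCoeff, h, partialDeriv_coord, eval_coord]

theorem koszulCoeff_eq {a : Fin 4 → S4} {f : Fin 3 → S4}
    (h : ∀ i, F.component i a = F.coord i * f i) {i j : Fin 3} (hij : i ≠ j) :
    F.koszulCoeff i j a = eval p (F.partialDeriv j (f i)) - eval p (F.partialDeriv j (f j)) := by
  simp [koszulCoeff, h, partialDeriv_coord, eval_coord, hij]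

theorem jet_add (a b : Fin 4 → S4) : F.jet (a + b) = F.jet a + F.jet b := by
  ext i
  fin_cases i <;> simp [jet, eulerCoeff, koszulCoeff] <;> ring

theorem eulerCoeff_smul (q : S4) {a : Fin 4 → S4} (ha : a ∈ derivModule F.quadruple) :
    F.eulerCoeff (q • a) = eval p q * F.eulerCoeff a := by
  obtain ⟨f, hf, -⟩ := F.exists_component_eq_coord_mul ha
  have hqf : F.component 0 (q • a) = F.coord 0 * (q * f 0) := by
    rw [map_smul, hf, smul_eq_mul, mul_left_comm]
  rw [F.eulerCoeff_eq hqf, F.eulerCoeff_eq (hf 0), map_mul]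

theorem koszulCoeff_smul (q : S4) {a : Fin 4 → S4} (ha : a ∈ derivModule F.quadruple)
    {i j : Fin 3} (hij : i ≠ j) :
    F.koszulCoeff i j (q • a) = eval p q * F.koszulCoeff i j a := by
  obtain ⟨f, hf, hval⟩ := F.exists_component_eq_coord_mul ha
  have hqf (i : Fin 3) : F.component i (q • a) = F.coord i * (q * f i) := by
    rw [map_smul, hf, smul_eq_mul, mul_left_comm]
  rw [F.koszulCoeff_eq hqf hij, F.koszulCoeff_eq hf hij]
  simp only [Derivation.leibniz, smul_eq_mul, map_add, map_mul]
  rw [hval i j]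
  ring

theorem jet_smul (q : S4) {a : Fin 4 → S4} (ha : a ∈ derivModule F.quadruple) :
    F.jet (q • a) = eval p q • F.jet a := by
  ext i
  fin_cases i <;> simp [jet, F.eulerCoeff_smul q ha, F.koszulCoeff_smul q ha]

/-- `jet` on the derivation module of `F.quadruple`, semilinear along evaluation at `p`. -/
noncomputable def jetMap : derivModule F.quadruple →ₛₗ[eval p] (Fin 5 → ℂ) where
  toFun a := F.jet a
  map_add' a b := F.jet_add a b
  map_smul' q a := F.jet_smul q a.2

theorem ofComponents_mem_derivModule {g : Fin 3 → S4} (hsum : ∑ i, F.coord i ∣ ∑ i, g i)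
    (hdvd : ∀ i, F.coord i ∣ g i) : F.ofComponents g ∈ derivModule F.quadruple := by
  simpa only [mem_derivModule_quadruple, component_ofComponents] using ⟨hsum, hdvd⟩

theorem constField_mem_derivModule : constField p ∈ derivModule F.quadruple := by
  simp [mem_derivModule_quadruple, component, coord, derMap_linForm_constField, F.form_point]

theorem jet_constField : F.jet (constField p) = Pi.single 0 1 := by
  ext i
  fin_cases i <;>
    simp [jet, eulerCoeff, koszulCoeff, component, coord, derMap_linForm_constField, F.form_point,
      F.height_point]

theorem eval_derMap_ofComponents {g : Fin 3 → S4} (hg : ∀ i, eval p (g i) = 0) (c : Fin 4 → ℂ) :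
    eval p (derMap (linForm c) (F.ofComponents g)) = 0 := by
  simp [ofComponents, hg]

/-- The Euler derivation `∑ xᵢ ∂ᵢ` transverse to `p`. -/
noncomputable def eulerField : Fin 4 → S4 := F.ofComponents F.coord

theorem eulerField_mem_derivModule : F.eulerField ∈ derivModule F.quadruple :=
  F.ofComponents_mem_derivModule dvd_rfl fun _ ↦ dvd_rfl

theorem jet_eulerField : F.jet F.eulerField = Pi.single 1 1 := by
  ext i
  fin_cases i <;>
    simp [jet, eulerField, eulerCoeff, koszulCoeff, component_ofComponents,
      eval_derMap_ofComponents, eval_coord, partialDeriv_coord]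

/-- The derivation `xᵢ xⱼ (∂ᵢ - ∂ⱼ)` given by a Koszul syzygy. -/
noncomputable def koszulField (i j : Fin 3) : Fin 4 → S4 :=
  F.ofComponents (Pi.single i (F.coord i * F.coord j) - Pi.single j (F.coord i * F.coord j))

theorem koszulField_mem_derivModule (i j : Fin 3) :
    F.koszulField i j ∈ derivModule F.quadruple := by
  refine F.ofComponents_mem_derivModule (by simp) fun k ↦ ?_
  simp only [Pi.sub_apply, Pi.single_apply]
  refine dvd_sub ?_ ?_ <;> split_ifs with h <;> simp [h]

theorem eulerCoeff_koszulField (i j : Fin 3) : F.eulerCoeff (F.koszulField i j) = 0 := by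
  have hprod : eval p (F.partialDeriv 0 (F.coord i * F.coord j)) = 0 := by simp [eval_coord]
  simp only [eulerCoeff, koszulField, component_ofComponents, Pi.sub_apply, Pi.single_apply]
  split_ifs <;> simp only [map_sub, map_zero, hprod, sub_zero]

theorem koszulCoeff_koszulField {i j k l : Fin 3} (hij : i < j) (hkl : k < l) :
    F.koszulCoeff i j (F.koszulField k l) = if i = k ∧ j = l then 1 else 0 := by
  simp only [koszulCoeff, koszulField, component_ofComponents, Pi.sub_apply, Pi.single_apply]
  fin_cases i <;> fin_cases j <;> fin_cases k <;> fin_cases l <;>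
    first | exact absurd hij (by decide) | exact absurd hkl (by decide) | simp [partialDeriv_coord]

theorem jet_koszulField {i j : Fin 3} (hij : i < j) :
    F.jet (F.koszulField i j) = ![0, 0, if 0 = i ∧ 1 = j then 1 else 0,
      if 0 = i ∧ 2 = j then 1 else 0, if 1 = i ∧ 2 = j then 1 else 0] := by
  have hheight : eval p (derMap (linForm F.height) (F.koszulField i j)) = 0 :=
    F.eval_derMap_ofComponents
      (by simp [Pi.single_apply, apply_ite (eval p), eval_coord]) _
  rw [jet, hheight, eulerCoeff_koszulField, koszulCoeff_koszulField F (by decide) hij,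
    koszulCoeff_koszulField F (by decide) hij, koszulCoeff_koszulField F (by decide) hij]

/-- Five derivations tangent to `F.quadruple` that are dual to the entries of `jet`. -/
noncomputable def dualField : Fin 5 → Fin 4 → S4 :=
  ![constField p, F.eulerField, F.koszulField 0 1, F.koszulField 0 2, F.koszulField 1 2]

theorem dualField_mem_derivModule (i : Fin 5) : F.dualField i ∈ derivModule F.quadruple := by
  fin_cases i
  exacts [F.constField_mem_derivModule, F.eulerField_mem_derivModule,
    F.koszulField_mem_derivModule 0 1, F.koszulField_mem_derivModule 0 2,
    F.koszulField_mem_derivModule 1 2]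

theorem jet_dualField (i : Fin 5) : F.jet (F.dualField i) = Pi.single i 1 := by
  fin_cases i
  · exact F.jet_constField
  · exact F.jet_eulerField
  all_goals
    refine (F.jet_koszulField (by decide)).trans ?_
    ext k
    fin_cases k <;> simp

theorem jetMap_surjective : Function.Surjective F.jetMap := by
  intro v
  refine ⟨∑ i, (C (v i) : S4) • (⟨F.dualField i, F.dualField_mem_derivModule i⟩ :
    derivModule F.quadruple), ?_⟩
  have hjet (i : Fin 5) :
      F.jetMap ⟨F.dualField i, F.dualField_mem_derivModule i⟩ = Pi.single i 1 :=
    F.jet_dualField i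
  simp only [map_sum, map_smulₛₗ, hjet, eval_C]
  exact (pi_eq_sum_univ' v).symm

end PointFrame

theorem exists_relation_of_generic {n : ℕ} {K : Type*} [Field K]
    {u : Fin (n + 1) → Fin (n + 1) → K} {p : Fin (n + 1) → K} (hp : p ≠ 0)
    (hup : ∀ i, u i ⬝ᵥ p = 0) (hu : ∀ i : Fin (n + 1), LinearIndependent K (u ∘ i.succAbove)) :
    ∃ g : Fin (n + 1) → K, (∀ i, g i ≠ 0) ∧ ∑ i, g i • u i = 0 := by
  have hdet : (Matrix.of u).det = 0 := Matrix.exists_mulVec_eq_zero_iff.1 ⟨p, hp, funext hup⟩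
  obtain ⟨g, hg, hgu⟩ := Matrix.exists_vecMul_eq_zero_iff.2 hdet
  have hrel : ∑ i, g i • u i = 0 := (Matrix.vecMul_eq_sum g (Matrix.of u)).symm.trans hgu
  refine ⟨g, fun i hi ↦ hg ?_, hrel⟩
  rw [Fin.sum_univ_succAbove _ i, hi, zero_smul, zero_add] at hrel
  have hrest := Fintype.linearIndependent_iff.1 (hu i) _ hrel
  exact funext ((Fin.forall_iff_succAbove i).2 ⟨hi, hrest⟩)

theorem exists_pointFrame_of_generic {u : Fin 4 → Fin 4 → ℂ} {p : Fin 4 → ℂ} (hp : p ≠ 0)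
    (hup : ∀ i, u i ⬝ᵥ p = 0) (hu : ∀ i : Fin 4, LinearIndependent ℂ (u ∘ i.succAbove)) :
    ∃ F : PointFrame p, ∃ c : Fin 4 → ℂ, (∀ i, c i ≠ 0) ∧ ∀ i, F.quadruple i = c i • u i := by
  obtain ⟨g, hg, hrel⟩ := exists_relation_of_generic hp hup hu
  let form (i : Fin 3) : Fin 4 → ℂ := g i.succ • u i.succ
  have hform : LinearIndependent ℂ form :=
    LinearIndependent.units_smul (hu 0) fun i ↦ Units.mk0 _ (hg i.succ)
  obtain ⟨dual, hdual⟩ := exists_dual_of_linearIndependent hform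
  obtain ⟨k, hk⟩ := Function.ne_iff.1 hp
  let F : PointFrame p :=
    { form := form
      dual := dual
      height := Pi.single k (p k)⁻¹
      form_dual := hdual
      form_point := fun i ↦ by simp [form, hup]
      height_point := by simpa using inv_mul_cancel₀ hk }
  have hsum : ∑ i, form i = -g 0 • u 0 := by
    rw [Fin.sum_univ_succ] at hrel
    rw [neg_smul]
    exact eq_neg_of_add_eq_zero_right hrel
  refine ⟨F, Fin.cons (-g 0) (Fin.tail g), ?_, ?_⟩
  · exact Fin.forall_fin_succ.2 ⟨neg_ne_zero.2 (hg 0), fun i ↦ hg i.succ⟩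
  · exact Fin.forall_fin_succ.2 ⟨hsum, fun i ↦ rfl⟩

theorem not_free_of_generic_quadruple {ι : Type} [Finite ι] {α : ι → Fin 4 → ℂ}
    {p : Fin 4 → ℂ} (hp : p ≠ 0) {e : Fin 4 → ι}
    (hmem : ∀ H, α H ⬝ᵥ p = 0 ↔ H ∈ Set.range e)
    (hgen : ∀ i : Fin 4, LinearIndependent ℂ ((α ∘ e) ∘ i.succAbove)) :
    ¬ Module.Free S4 (derivModule α) := by
  intro hfree
  obtain ⟨F, c, hc, hF⟩ :=
    exists_pointFrame_of_generic hp (fun i ↦ (hmem (e i)).2 ⟨i, rfl⟩) hgen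
  have hloc : derivModule (localization α p) = derivModule F.quadruple :=
    derivModule_localization_eq hmem hc hF
  let f : derivModule (localization α p) →ₛₗ[eval p] (Fin 5 → ℂ) :=
    F.jetMap.comp (LinearEquiv.ofEq _ _ hloc).toLinearMap
  have hf : Function.Surjective f :=
    F.jetMap_surjective.comp (LinearEquiv.ofEq _ _ hloc).surjective
  simpa using finrank_le_four_of_localization f hf

theorem linearIndependent_A245_quadruple_comp_succAbove (i : Fin 4) :
    LinearIndependent ℂ ((A245 ∘ ![0, 1, 2, 4]) ∘ i.succAbove) := by
  rw [Fintype.linearIndependent_iff]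
  fin_cases i <;>
    simp [A245, Fin.sum_univ_three, funext_iff, Fin.forall_fin_succ, Fin.succAbove] <;>
    grind

/-- The derivation module of 𝒜₂₄₅ is not a free `S`-module. -/
theorem not_free_A245 : ¬ Module.Free S4 ↥(derivModule A245) := by
  refine not_free_of_generic_quadruple (p := ![0, 0, 0, 1]) (by simp) (fun H ↦ ?_)
    linearIndependent_A245_quadruple_comp_succAbove
  fin_cases H <;> simp [A245, Matrix.vecHead, Matrix.vecTail]
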